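/- arXiv:1901.10837 — 2 statements merged into one kernel-verified Lean document; each statement's English description precedes it below -/
import Mathlib

section
/- Let D1, D0 be probability measures on Z corrupted under the MC model with parameters α, β ∈ (0,1), α + β < 1, giving D1c and D0c. Then for any bounded measurable h: Z → ℝ and any τ > 0: |E_{D0}[h] − E_{D1}[h]| ≤ τ if and only if |E_{D0c}[h] − E_{D1c}[h]| ≤ τ·(1 − α − β). -/
open MeasureTheory

/-- The integral against a combination of two measures with nonnegative real weights. -/
theorem integral_ofReal_smul_add_ofReal_smul {Z : Type*} [MeasurableSpace Z]
    {μ ν : Measure Z} {f : Z → ℝ} (hμ : Integrable f μ) (hν : Integrable f ν)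
    {a b : ℝ} (ha : 0 ≤ a) (hb : 0 ≤ b) :
    ∫ z, f z ∂(ENNReal.ofReal a • μ + ENNReal.ofReal b • ν) =
      a * ∫ z, f z ∂μ + b * ∫ z, f z ∂ν := by
  rw [integral_add_measure (hμ.smul_measure ENNReal.ofReal_ne_top)
    (hν.smul_measure ENNReal.ofReal_ne_top), integral_smul_measure, integral_smul_measure,
    ENNReal.toReal_ofReal ha, ENNReal.toReal_ofReal hb, smul_eq_mul, smul_eq_mul]

/-- fairness tolerance equivalence under MC noise (Theorem 1, DP case). -/
theorem mc_fairness_tolerance_iff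
    {Z : Type*} [MeasurableSpace Z]
    (D1 D0 : Measure Z) [IsProbabilityMeasure D1] [IsProbabilityMeasure D0]
    (α β : ℝ) (hα : α ∈ Set.Ioo (0:ℝ) 1) (hβ : β ∈ Set.Ioo (0:ℝ) 1)
    (hαβ : α + β < 1)
    (D1c D0c : Measure Z)
    (hD1c : D1c = ENNReal.ofReal (1 - α) • D1 + ENNReal.ofReal α • D0)
    (hD0c : D0c = ENNReal.ofReal β • D1 + ENNReal.ofReal (1 - β) • D0)
    (h : Z → ℝ) (hmeas : Measurable h) (C : ℝ) (hbound : ∀ z, |h z| ≤ C)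
    (τ : ℝ) (hτ : 0 < τ) :
    |(∫ z, h z ∂D0) - (∫ z, h z ∂D1)| ≤ τ ↔
      |(∫ z, h z ∂D0c) - (∫ z, h z ∂D1c)| ≤ τ * (1 - α - β) := by
  have integrable_h (μ : Measure Z) [IsProbabilityMeasure μ] : Integrable h μ :=
    .of_bound hmeas.aestronglyMeasurable C (.of_forall hbound)
  have hpos : 0 < 1 - α - β := by linarith
  have hdiff : (∫ z, h z ∂D0c) - (∫ z, h z ∂D1c) =
      ((∫ z, h z ∂D0) - (∫ z, h z ∂D1)) * (1 - α - β) := by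
    rw [hD0c, hD1c,
      integral_ofReal_smul_add_ofReal_smul (integrable_h D1) (integrable_h D0)
        hβ.1.le (sub_nonneg.2 hβ.2.le),
      integral_ofReal_smul_add_ofReal_smul (integrable_h D1) (integrable_h D0)
        (sub_nonneg.2 hα.2.le) hα.1.le]
    ring
  rw [hdiff, abs_mul, abs_of_pos hpos, mul_le_mul_iff_left₀ hpos]
end

section
/- Suppose the group base rates are preserved under corruption, i.e., max(P_D[A=0], P_D[A=1]) = max(P_{Dcorr}[A=0], P_{Dcorr}[A=1]) = M, and MC noise with parameters α, β ∈ (0,1), α+β<1 acts on the sensitive attribute. Then for any bounded c and τ > 0: max_a |E_D[c(X)|A=a] − E_D[c(X)]| < τ if and only if max_a |E_{Dcorr}[c(X)|A=a] − E_{Dcorr}[c(X)]| < τ·(1−α−β). -/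
open MeasureTheory ProbabilityTheory

theorem setOf_eq_one_eq_compl {Ω : Type*} (B : Ω → Fin 2) :
    {ω | B ω = 1} = {ω | B ω = 0}ᶜ := by
  ext ω
  simp only [Set.mem_ofPred_eq, Set.mem_compl_iff]
  lia

/-- The law of total expectation for a binary variable. -/
theorem integral_eq_sum_cond_fin_two {Ω : Type*} [MeasurableSpace Ω] (μ : Measure Ω)
    [IsFiniteMeasure μ] {B : Ω → Fin 2} (hB : Measurable B) {f : Ω → ℝ} (hf : Integrable f μ) :
    ∫ ω, f ω ∂μ = μ.real {ω | B ω = 0} * (∫ ω, f ω ∂μ[|{ω | B ω = 0}])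
      + μ.real {ω | B ω = 1} * ∫ ω, f ω ∂μ[|{ω | B ω = 1}] := by
  have scaled (s : Set Ω) : μ.real s * (∫ ω, f ω ∂μ[|s]) = ∫ ω in s, f ω ∂μ := by
    by_cases hs : μ s = 0
    · simp [Measure.real, hs, Measure.restrict_eq_zero.mpr hs]
    · have hs' : (μ s).toReal ≠ 0 := ENNReal.toReal_ne_zero.mpr ⟨hs, measure_ne_top μ s⟩
      rw [ProbabilityTheory.cond, integral_smul_measure, ENNReal.toReal_inv, smul_eq_mul,
        Measure.real, mul_inv_cancel_left₀ hs']
  have hm : MeasurableSet {ω | B ω = 0} := hB (measurableSet_singleton 0)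
  rw [scaled, scaled, setOf_eq_one_eq_compl, integral_add_compl hm hf]

theorem measureReal_fin_two_add {Ω : Type*} [MeasurableSpace Ω] (μ : Measure Ω)
    [IsProbabilityMeasure μ] {B : Ω → Fin 2} (hB : Measurable B) :
    μ.real {ω | B ω = 0} + μ.real {ω | B ω = 1} = 1 := by
  have hm : MeasurableSet {ω | B ω = 0} := hB (measurableSet_singleton 0)
  rw [setOf_eq_one_eq_compl, measureReal_add_measureReal_compl hm, probReal_univ]

/-- The largest deviation of a group mean from the overall mean is the difference of the group
means scaled by the larger base rate. -/
theorem max_abs_integral_cond_sub_integral {Ω : Type*} [MeasurableSpace Ω] (μ : Measure Ω)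
    [IsProbabilityMeasure μ] {B : Ω → Fin 2} (hB : Measurable B) {f : Ω → ℝ}
    (hf : Integrable f μ) :
    max |(∫ ω, f ω ∂μ[|{ω | B ω = 1}]) - ∫ ω, f ω ∂μ|
        |(∫ ω, f ω ∂μ[|{ω | B ω = 0}]) - ∫ ω, f ω ∂μ|
      = max (μ.real {ω | B ω = 0}) (μ.real {ω | B ω = 1})
        * |(∫ ω, f ω ∂μ[|{ω | B ω = 1}]) - ∫ ω, f ω ∂μ[|{ω | B ω = 0}]| := by
  rw [integral_eq_sum_cond_fin_two μ hB hf]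
  have hp := measureReal_fin_two_add μ hB
  have hp0 : 0 ≤ μ.real {ω | B ω = 0} := measureReal_nonneg
  have hp1 : 0 ≤ μ.real {ω | B ω = 1} := measureReal_nonneg
  generalize μ.real {ω | B ω = 0} = p at *
  generalize μ.real {ω | B ω = 1} = q at *
  generalize (∫ ω, f ω ∂μ[|{ω | B ω = 1}]) = x
  generalize (∫ ω, f ω ∂μ[|{ω | B ω = 0}]) = y
  obtain rfl : q = 1 - p := by linarith
  rw [max_mul_of_nonneg _ _ (abs_nonneg _)]
  congr 1
  · rw [← abs_of_nonneg hp0, ← abs_mul, abs_of_nonneg hp0]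
    congr 1
    ring
  · rw [← abs_of_nonneg hp1, ← abs_mul, abs_of_nonneg hp1, ← abs_neg]
    congr 1
    ring

theorem integral_ofReal_smul_add {𝓧 : Type*} [MeasurableSpace 𝓧] {ν ρ : Measure 𝓧} {a b : ℝ}
    (ha : 0 ≤ a) (hb : 0 ≤ b) {c : 𝓧 → ℝ} (hν : Integrable c ν) (hρ : Integrable c ρ) :
    ∫ x, c x ∂(ENNReal.ofReal a • ν + ENNReal.ofReal b • ρ)
      = a * (∫ x, c x ∂ν) + b * ∫ x, c x ∂ρ := by
  rw [integral_add_measure (hν.smul_measure ENNReal.ofReal_ne_top)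
    (hρ.smul_measure ENNReal.ofReal_ne_top), integral_smul_measure, integral_smul_measure,
    ENNReal.toReal_ofReal ha, ENNReal.toReal_ofReal hb, smul_eq_mul, smul_eq_mul]

/-- Corollary 1, DP case: if the group base rates are preserved under
corruption, the clean Agarwal-style constraint at tolerance `τ` is equivalent to the
corrupted one at tolerance `τ * (1 - α - β)`. -/
theorem agarwal_constraint_mc_iff
    {Ω 𝓧 : Type*} [MeasurableSpace Ω] [MeasurableSpace 𝓧]
    (μ : Measure Ω) [IsProbabilityMeasure μ]
    (X : Ω → 𝓧) (A Acorr : Ω → Fin 2)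
    (hX : Measurable X) (hA : Measurable A) (hAc : Measurable Acorr)
    (α β : ℝ) (hα : α ∈ Set.Ioo (0:ℝ) 1) (hβ : β ∈ Set.Ioo (0:ℝ) 1) (hαβ : α + β < 1)
    (hmix1 : (μ[|{ω | Acorr ω = 1}]).map X
        = ENNReal.ofReal (1 - α) • (μ[|{ω | A ω = 1}]).map X
          + ENNReal.ofReal α • (μ[|{ω | A ω = 0}]).map X)
    (hmix0 : (μ[|{ω | Acorr ω = 0}]).map X
        = ENNReal.ofReal β • (μ[|{ω | A ω = 1}]).map X
          + ENNReal.ofReal (1 - β) • (μ[|{ω | A ω = 0}]).map X)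
    (hbase : max (μ {ω | A ω = 0}).toReal (μ {ω | A ω = 1}).toReal
        = max (μ {ω | Acorr ω = 0}).toReal (μ {ω | Acorr ω = 1}).toReal)
    (c : 𝓧 → ℝ) (hc : Measurable c) (C : ℝ) (hbound : ∀ x, |c x| ≤ C)
    (τ : ℝ) (hτ : 0 < τ) :
    max |(∫ ω, c (X ω) ∂μ[|{ω | A ω = 1}]) - ∫ ω, c (X ω) ∂μ|
        |(∫ ω, c (X ω) ∂μ[|{ω | A ω = 0}]) - ∫ ω, c (X ω) ∂μ| < τ ↔
      max |(∫ ω, c (X ω) ∂μ[|{ω | Acorr ω = 1}]) - ∫ ω, c (X ω) ∂μ|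
          |(∫ ω, c (X ω) ∂μ[|{ω | Acorr ω = 0}]) - ∫ ω, c (X ω) ∂μ|
        < τ * (1 - α - β) := by
  obtain ⟨hα0, hα1⟩ := hα
  obtain ⟨hβ0, hβ1⟩ := hβ
  have bounded_integrable (ν : Measure 𝓧) [IsFiniteMeasure ν] : Integrable c ν :=
    .of_bound hc.aestronglyMeasurable C (.of_forall hbound)
  have hf : Integrable (fun ω => c (X ω)) μ :=
    .of_bound (hc.comp hX).aestronglyMeasurable C (.of_forall fun ω => hbound (X ω))
  have integral_map_X (s : Set Ω) : ∫ x, c x ∂(μ[|s]).map X = ∫ ω, c (X ω) ∂μ[|s] :=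
    integral_map hX.aemeasurable hc.aestronglyMeasurable
  have h1 := congrArg (fun ν => ∫ x, c x ∂ν) hmix1
  have h0 := congrArg (fun ν => ∫ x, c x ∂ν) hmix0
  simp only [integral_ofReal_smul_add (sub_nonneg.mpr hα1.le) hα0.le (bounded_integrable _)
    (bounded_integrable _), integral_map_X] at h1
  simp only [integral_ofReal_smul_add hβ0.le (sub_nonneg.mpr hβ1.le) (bounded_integrable _)
    (bounded_integrable _), integral_map_X] at h0
  rw [max_abs_integral_cond_sub_integral μ hA hf, max_abs_integral_cond_sub_integral μ hAc hf,
    h1, h0]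
  simp only [Measure.real, ← hbase]
  have hd : 0 < 1 - α - β := by linarith
  generalize (∫ ω, c (X ω) ∂μ[|{ω | A ω = 1}]) = x
  generalize (∫ ω, c (X ω) ∂μ[|{ω | A ω = 0}]) = y
  have hdiff : (1 - α) * x + α * y - (β * x + (1 - β) * y) = (x - y) * (1 - α - β) := by ring
  rw [hdiff, abs_mul, abs_of_pos hd, ← mul_assoc, mul_lt_mul_iff_left₀ hd]
end
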